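/- For every even integer k ≥ 13 (equivalently, every even k ≥ 14), the rational number ( k! / (2^{k−1}(2^k−1)|B_k|) )² is not an integer. -/

import Mathlib

/-!
Write `q` for the rational number in the statement. If `q ^ 2` is an integer, then so is `q`, and
by the von Staudt–Clausen theorem the denominator of `B_k` divides the squarefree number
`D = ∏ p` over the primes `p` with `p - 1 ∣ k`. Clearing denominators (`B_k ≠ 0` because
`ζ(k) > 0`) gives `2 ^ k - 1 ∣ k! * D` (`two_pow_sub_one_dvd`).

Put `k = 2 * m` and consider the divisor `Φ_m(4)` of `4 ^ m - 1 = 2 ^ k - 1`.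
A prime `p ∣ Φ_m(4)` with `p ∤ m` satisfies `p ≡ 1 [MOD k]` (`modEq_one_of_dvd_cyclotomic`), so
it does not divide `k!`, and hence it divides `D`; this forces `p = k + 1`, with exponent one.
A prime `p ∣ m` divides `Φ_m(4)` at most once, by lifting the exponent
(`not_sq_dvd_cyclotomic`). Therefore `Φ_m(4)` divides `m * (2 * m + 1)`.

On the other hand `Φ_m(4) > 3 ^ φ(m)`, and `m ≤ 2 * φ(m) ^ 2` makes this larger than
`m * (2 * m + 1)` for every `m ≥ 7` other than `8, 10, 12`. In these three cases `2 ^ k - 1` has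
the prime factor `257`, `41`, `241` respectively, which is too large to divide `k! * D`.
-/

open Polynomial hiding bernoulli

/-- The product of the primes `p` with `p - 1 ∣ k`, for `k > 0`; the range only records that such
primes satisfy `p ≤ k + 1`. By von Staudt–Clausen, for even `k > 0` it is the denominator
of `B_k`. -/
def staudtDen (k : ℕ) : ℕ :=
  ∏ p ∈ Finset.range (k + 2) with p.Prime ∧ (p - 1) ∣ k, p

lemma staudtDen_ne_zero (k : ℕ) : staudtDen k ≠ 0 := by
  unfold staudtDen
  rw [Finset.prod_ne_zero_iff]
  intro p hp
  exact (Finset.mem_filter.1 hp).2.1.ne_zero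

lemma prime_le_of_dvd_staudtDen {k p : ℕ} (hp : p.Prime) (h : p ∣ staudtDen k) : p ≤ k + 1 := by
  obtain ⟨r, hr, hpr⟩ := (hp.prime.dvd_finsetProd_iff _).1 h
  simp only [Finset.mem_filter, Finset.mem_range] at hr
  have := (Nat.prime_dvd_prime_iff_eq hp hr.2.1).1 hpr
  omega

lemma squarefree_staudtDen (k : ℕ) : Squarefree (staudtDen k) := by
  unfold staudtDen
  refine Finset.squarefree_prod_of_pairwise_isCoprime ?_ ?_
  · intro a ha b hb hab
    simp only [Finset.coe_filter, Set.mem_ofPred_eq] at ha hb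
    exact Nat.coprime_iff_isRelPrime.1 ((Nat.coprime_primes ha.2.1 hb.2.1).2 hab)
  · intro p hp
    exact (Finset.mem_filter.1 hp).2.1.prime.squarefree

lemma exists_int_eq_staudtDen_mul_bernoulli (m : ℕ) :
    ∃ N : ℤ, (staudtDen (2 * m) : ℚ) * bernoulli (2 * m) = N := by
  obtain ⟨z, hz⟩ := Bernoulli.vonStaudt_clausen m
  -- `D * ∑ 1 / p` is an integer, since every `p` in the sum divides `D`.
  have hsum : ∃ M : ℤ, (staudtDen (2 * m) : ℚ) *
      ∑ p ∈ Finset.range (2 * m + 2) with p.Prime ∧ (p - 1) ∣ 2 * m, (1 : ℚ) / p = M := by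
    refine ⟨∑ p ∈ Finset.range (2 * m + 2) with p.Prime ∧ (p - 1) ∣ 2 * m,
      ((staudtDen (2 * m) / p : ℕ) : ℤ), ?_⟩
    rw [Finset.mul_sum]
    push_cast
    refine Finset.sum_congr rfl fun p hp => ?_
    have hd : p ∣ staudtDen (2 * m) := Finset.dvd_prod_of_mem (fun p => p) hp
    have h0 : (p : ℚ) ≠ 0 := by exact_mod_cast (Finset.mem_filter.1 hp).2.1.ne_zero
    have hc : ((staudtDen (2 * m) / p : ℕ) : ℚ) = (staudtDen (2 * m) : ℚ) / p :=
      Nat.cast_div hd h0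
    rw [mul_one_div, ← hc]
    norm_cast
  obtain ⟨M, hM⟩ := hsum
  refine ⟨staudtDen (2 * m) * z - M, ?_⟩
  push_cast
  rw [hz, ← hM]
  ring

lemma bernoulli_two_mul_ne_zero {m : ℕ} (hm : m ≠ 0) : bernoulli (2 * m) ≠ 0 := by
  intro h
  have hs := hasSum_zeta_nat hm
  rw [h] at hs
  simp only [Rat.cast_zero, mul_zero, zero_div] at hs
  -- The series for `ζ(2m)` has nonnegative terms and its term at `1` is `1`.
  have h1 := le_hasSum hs 1 (fun n _ => by positivity)
  norm_num at h1

lemma two_pow_sub_one_dvd {m : ℕ} (hm : m ≠ 0) {n : ℤ}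
    (h : (((2 * m).factorial : ℚ) /
      (2 ^ (2 * m - 1) * (2 ^ (2 * m) - 1) * |bernoulli (2 * m)|)) ^ 2 = n) :
    2 ^ (2 * m) - 1 ∣ (2 * m).factorial * staudtDen (2 * m) := by
  set q := ((2 * m).factorial : ℚ) /
      (2 ^ (2 * m - 1) * (2 ^ (2 * m) - 1) * |bernoulli (2 * m)|) with hq
  -- A rational number whose square is an integer is an integer.
  have hden : q.den = 1 := by
    have h2 := congrArg Rat.den h
    rw [Rat.den_pow, Rat.den_intCast] at h2
    simpa using h2
  have hqn : (q.num : ℚ) = q := Rat.coe_int_num_of_den_eq_one hden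
  obtain ⟨N, hN⟩ := exists_int_eq_staudtDen_mul_bernoulli m
  have hB : |bernoulli (2 * m)| ≠ 0 := abs_ne_zero.2 (bernoulli_two_mul_ne_zero hm)
  have hpow : (2 : ℚ) ^ (2 * m) - 1 ≠ 0 :=
    (sub_pos.2 (one_lt_pow₀ (by norm_num) (by omega))).ne'
  have habs : (staudtDen (2 * m) : ℚ) * |bernoulli (2 * m)| = |(N : ℚ)| := by
    rw [← hN, abs_mul, Nat.abs_cast]
  have hmul : ((2 * m).factorial : ℚ) =
      q * (2 ^ (2 * m - 1) * (2 ^ (2 * m) - 1) * |bernoulli (2 * m)|) := by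
    rw [hq, div_mul_cancel₀]
    exact mul_ne_zero (mul_ne_zero (by positivity) hpow) hB
  have hint : (((2 * m).factorial * staudtDen (2 * m) : ℕ) : ℤ) =
      (2 ^ (2 * m) - 1) * (q.num * 2 ^ (2 * m - 1) * |N|) := by
    have : (((2 * m).factorial : ℚ) * staudtDen (2 * m)) =
        (2 ^ (2 * m) - 1) * (q.num * 2 ^ (2 * m - 1) * |(N : ℚ)|) := by
      rw [hqn, ← habs, hmul]
      ring
    exact_mod_cast this
  have hd : ((2 ^ (2 * m) - 1 : ℕ) : ℤ) ∣ (((2 * m).factorial * staudtDen (2 * m) : ℕ) : ℤ) := by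
    rw [hint, Nat.cast_sub Nat.one_le_two_pow]
    push_cast
    exact Dvd.intro _ rfl
  exact_mod_cast hd

/-- A prime not dividing `m` but dividing `Φ_m(4)` is congruent to `1` modulo `2m`, and not just
modulo `m`: the order of `4` modulo `p` is `m`, so that of `2` is `2m`, unless `m` is odd, in which
case `2m ∣ p - 1` because `p - 1` is even. -/
lemma modEq_one_of_dvd_cyclotomic {m p : ℕ} (hp : p.Prime) (hp2 : p ≠ 2)
    (hpm : ¬ p ∣ m) (h : (p : ℤ) ∣ (cyclotomic m ℤ).eval 4) : 2 * m ∣ p - 1 := by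
  have : Fact p.Prime := ⟨hp⟩
  have : NeZero (m : ZMod p) := ⟨by rwa [Ne, ZMod.natCast_eq_zero_iff]⟩
  have hroot : (cyclotomic m (ZMod p)).IsRoot 4 := by
    have h1 := cyclotomic.eval_apply (4 : ℤ) m (Int.castRingHom (ZMod p))
    rw [IsRoot.def]
    have h2 : (Int.castRingHom (ZMod p)) 4 = 4 := by simp
    rw [h2] at h1
    rw [h1, eq_intCast]
    exact (ZMod.intCast_zmod_eq_zero_iff_dvd _ p).2 h
  have hord : m = orderOf (4 : ZMod p) := (isRoot_cyclotomic_iff.1 hroot).eq_orderOf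
  have h20 : (2 : ZMod p) ≠ 0 := by
    intro h0
    have : ((2 : ℕ) : ZMod p) = 0 := by exact_mod_cast h0
    rw [ZMod.natCast_eq_zero_iff] at this
    exact hp2 ((Nat.prime_dvd_prime_iff_eq hp Nat.prime_two).1 this)
  have ho : orderOf (2 : ZMod p) ∣ p - 1 :=
    orderOf_dvd_of_pow_eq_one (ZMod.pow_card_sub_one_eq_one h20)
  have h4 : (4 : ZMod p) = 2 ^ 2 := by norm_num
  rw [h4, orderOf_pow' _ two_ne_zero] at hord
  have heven : 2 ∣ p - 1 := (hp.even_sub_one hp2).two_dvd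
  rcases Nat.even_or_odd (orderOf (2 : ZMod p)) with he | he
  · have hg : (orderOf (2 : ZMod p)).gcd 2 = 2 := Nat.gcd_eq_right he.two_dvd
    rw [hg] at hord
    rw [hord, Nat.mul_div_cancel' he.two_dvd]
    exact ho
  · have hg : (orderOf (2 : ZMod p)).gcd 2 = 1 := Nat.coprime_two_right.2 he
    rw [hg, Nat.div_one] at hord
    rw [hord]
    exact Nat.Coprime.mul_dvd_of_dvd_of_dvd (Nat.coprime_two_left.2 he) heven ho

/-- An odd prime `p ∣ m` divides `Φ_m(4)` at most once: with `m = p * n`, the product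
`(4 ^ n - 1) * Φ_m(4)` divides `4 ^ m - 1`, which contains only one more factor `p` than
`4 ^ n - 1` by lifting the exponent. -/
lemma not_sq_dvd_cyclotomic {m p : ℕ} (hm : m ≠ 0) (hp : p.Prime) (hp2 : p ≠ 2)
    (hpm : p ∣ m) : ¬ (p : ℤ) ^ 2 ∣ (cyclotomic m ℤ).eval 4 := by
  intro h
  have : Fact p.Prime := ⟨hp⟩
  obtain ⟨n, rfl⟩ := hpm
  have hn : n ≠ 0 := by rintro rfl; simp at hm
  have hprop : n ∈ (p * n).properDivisors := by
    rw [Nat.mem_properDivisors]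
    exact ⟨Dvd.intro_left p rfl, lt_mul_left (Nat.pos_of_ne_zero hn) hp.one_lt⟩
  have hdvd : ((4 : ℤ) ^ n - 1) * (cyclotomic (p * n) ℤ).eval 4 ∣ (4 : ℤ) ^ (p * n) - 1 := by
    have := eval_dvd (x := (4 : ℤ))
      (X_pow_sub_one_mul_cyclotomic_dvd_X_pow_sub_one_of_dvd ℤ hprop)
    simpa using this
  -- By Fermat, `4 ^ (p * n) ≡ 4 ^ n` modulo `p`.
  have hxy : (p : ℤ) ∣ 4 ^ n - 1 := by
    have h1 : (p : ℤ) ∣ (4 : ℤ) ^ (p * n) - 1 :=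
      ((dvd_pow_self _ two_ne_zero).trans h).trans ((Dvd.intro_left _ rfl).trans hdvd)
    rw [← ZMod.intCast_zmod_eq_zero_iff_dvd] at h1 ⊢
    push_cast at h1 ⊢
    rwa [mul_comm, pow_mul, ZMod.pow_card] at h1
  have hx : ¬ (p : ℤ) ∣ 4 ^ n := by
    intro h4
    have h1 : (p : ℤ) ∣ 1 := by simpa using dvd_sub h4 hxy
    exact hp.one_lt.ne' (by exact_mod_cast Int.eq_one_of_dvd_one (by positivity) h1)
  have hlte := Int.emultiplicity_pow_sub_pow hp (hp.odd_of_ne_two hp2) hxy hx p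
  rw [one_pow, ← pow_mul, mul_comm n p,
    (Nat.finiteMultiplicity_iff.2 ⟨hp.ne_one, hp.pos⟩).emultiplicity_self] at hlte
  have hpos : (1 : ℤ) < 4 ^ n := one_lt_pow₀ (by norm_num) hn
  have hfin : FiniteMultiplicity (p : ℤ) (4 ^ n - 1) :=
    Int.finiteMultiplicity_iff.2 ⟨by simpa using hp.ne_one, by omega⟩
  have hle := emultiplicity_le_emultiplicity_of_dvd_right (a := (p : ℤ)) hdvd
  rw [emultiplicity_mul (Nat.prime_iff_prime_int.1 hp), hlte,
    hfin.emultiplicity_eq_multiplicity] at hle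
  have h2 : (2 : ℕ∞) ≤ emultiplicity (p : ℤ) ((cyclotomic (p * n) ℤ).eval 4) :=
    le_emultiplicity_of_pow_dvd h
  have h3 := (add_le_add_right h2 (multiplicity (p : ℤ) (4 ^ n - 1) : ℕ∞)).trans hle
  have h4 : multiplicity (p : ℤ) (4 ^ n - 1) + 2 ≤ multiplicity (p : ℤ) (4 ^ n - 1) + 1 := by
    exact_mod_cast h3
  omega

lemma prime_le_of_dvd_factorial_mul {k p : ℕ} (hp : p.Prime)
    (h : p ∣ k.factorial * staudtDen k) : p ≤ k + 1 := by
  rcases (hp.dvd_mul).1 h with h | h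
  · exact ((hp.dvd_factorial).1 h).trans k.le_succ
  · exact prime_le_of_dvd_staudtDen hp h

lemma cyclotomic_eval_dvd {m : ℕ} (hm : m ≠ 0)
    (h : 2 ^ (2 * m) - 1 ∣ (2 * m).factorial * staudtDen (2 * m)) :
    ((cyclotomic m ℤ).eval 4).natAbs ∣ m * (2 * m + 1) := by
  set c := ((cyclotomic m ℤ).eval 4).natAbs with hc
  have hcd : c ∣ 2 ^ (2 * m) - 1 := by
    have h1 := eval_dvd (x := (4 : ℤ)) (cyclotomic.dvd_X_pow_sub_one m ℤ)
    rw [eval_sub, eval_pow, eval_X, eval_one] at h1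
    rw [← Int.natCast_dvd_natCast, hc, Int.natAbs_dvd, Nat.cast_sub Nat.one_le_two_pow, pow_mul]
    exact_mod_cast h1
  have hodd : ∀ p, p ∣ c → p ≠ 2 := by
    rintro p hpc rfl
    have h1 := hpc.trans hcd
    have h2 : 2 ∣ 2 ^ (2 * m) := dvd_pow_self 2 (by omega)
    have h3 : 1 ≤ 2 ^ (2 * m) := Nat.one_le_two_pow
    omega
  -- Primes not dividing `m` are at least `2 * m + 1`, hence do not divide `(2 * m)!`.
  have key : ∀ p, p.Prime → p ∣ c → ¬ p ∣ m →
      p = 2 * m + 1 ∧ ¬ p ∣ (2 * m).factorial := by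
    intro p hp hpc hpm
    have h1 : 2 * m ≤ p - 1 := Nat.le_of_dvd (by have := hp.two_le; omega)
      (modEq_one_of_dvd_cyclotomic hp (hodd p hpc) hpm (Int.natCast_dvd.2 hpc))
    have h2 := prime_le_of_dvd_factorial_mul hp ((hpc.trans hcd).trans h)
    have h3 := hp.two_le
    refine ⟨by omega, fun h4 => ?_⟩
    have := hp.dvd_factorial.1 h4
    omega
  have hsq : Squarefree c := by
    rw [Nat.squarefree_iff_prime_squarefree]
    intro p hp hpp
    have hpc : p ∣ c := (Dvd.intro _ rfl).trans hpp
    by_cases hpm : p ∣ m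
    · refine not_sq_dvd_cyclotomic hm hp (hodd p hpc) hpm ?_
      rw [← Nat.cast_pow, Int.natCast_dvd, sq]
      exact hpp
    · have hcop : (p * p).Coprime (2 * m).factorial := by
        have := (hp.coprime_iff_not_dvd).2 (key p hp hpc hpm).2
        exact this.mul_left this
      have h1 := hcop.dvd_of_dvd_mul_left ((hpp.trans hcd).trans h)
      exact hp.one_lt.ne' (Nat.isUnit_iff.1 (squarefree_staudtDen _ p h1))
  rw [← Nat.prod_primeFactors_of_squarefree hsq]
  refine Finset.prod_primes_dvd _ (fun p hp => (Nat.prime_of_mem_primeFactors hp).prime) ?_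
  intro p hp
  by_cases hpm : p ∣ m
  · exact hpm.mul_right _
  · rw [(key p (Nat.prime_of_mem_primeFactors hp) (Nat.dvd_of_mem_primeFactors hp) hpm).1]
    exact Dvd.intro_left _ rfl

/-- For odd `n` the bound improves to `n ≤ φ(n) ^ 2`; only a power of `2` costs the factor `2`. -/
lemma le_totient_sq (n : ℕ) : (Odd n → n ≤ n.totient ^ 2) ∧ n ≤ 2 * n.totient ^ 2 := by
  induction n using Nat.recOnPosPrimePosCoprime with
  | zero => simp
  | one => simp
  | prime_pow p a hp ha =>
    obtain ⟨b, rfl⟩ : ∃ b, a = b + 1 := ⟨a - 1, by omega⟩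
    rw [Nat.totient_prime_pow_succ hp]
    have hb : 1 ≤ p ^ b := Nat.one_le_pow _ _ hp.pos
    have hbb : p ^ b ≤ (p ^ b) ^ 2 := Nat.le_self_pow two_ne_zero _
    rcases hp.eq_two_or_odd' with rfl | hodd
    · refine ⟨fun h => absurd h (by simp [pow_succ]), ?_⟩
      rw [pow_succ]
      simp only [Nat.add_one_sub_one, mul_one]
      omega
    · have h3 : p ≤ (p - 1) ^ 2 := by
        have : 3 ≤ p := by
          have := hp.two_le
          rcases hodd with ⟨t, rfl⟩
          omega
        obtain ⟨t, rfl⟩ := Nat.exists_eq_add_of_le this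
        rw [show 3 + t - 1 = t + 2 by omega]
        nlinarith
      have : p ^ (b + 1) ≤ (p ^ b * (p - 1)) ^ 2 := by
        rw [pow_succ, mul_pow]
        exact Nat.mul_le_mul hbb h3
      exact ⟨fun _ => this, by omega⟩
  | coprime a b ha hb hab iha ihb =>
    rw [Nat.totient_mul hab, mul_pow]
    refine ⟨fun h => Nat.mul_le_mul (iha.1 (Nat.odd_mul.1 h).1) (ihb.1 (Nat.odd_mul.1 h).2), ?_⟩
    -- Coprime factors cannot both be even.
    rcases Nat.even_or_odd a with he | ho
    · have hbo : Odd b := by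
        rw [← Nat.not_even_iff_odd]
        intro hbe
        have := Nat.dvd_gcd he.two_dvd hbe.two_dvd
        rw [hab.gcd_eq_one] at this
        omega
      calc a * b ≤ (2 * a.totient ^ 2) * b.totient ^ 2 := Nat.mul_le_mul iha.2 (ihb.1 hbo)
        _ = _ := by ring
    · calc a * b ≤ a.totient ^ 2 * (2 * b.totient ^ 2) := Nat.mul_le_mul (iha.1 ho) ihb.2
        _ = _ := by ring

lemma small_totient_bound : ∀ m < 201, 7 ≤ m → m ≠ 8 → m ≠ 10 → m ≠ 12 →
    m * (2 * m + 1) ≤ 3 ^ m.totient := by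
  decide +kernel

lemma mul_le_three_pow_totient {m : ℕ} (hm : 7 ≤ m) (h8 : m ≠ 8) (h10 : m ≠ 10) (h12 : m ≠ 12) :
    m * (2 * m + 1) ≤ 3 ^ m.totient := by
  rcases Nat.lt_or_ge m 201 with h | h
  · exact small_totient_bound m h hm h8 h10 h12
  · have hb := (le_totient_sq m).2
    -- `2 * 10 ^ 2 = 200`, so `φ(m) ≥ 11`.
    have ht : 11 ≤ m.totient := by nlinarith
    generalize m.totient = t at hb ht
    have hexp : 2 * t ^ 2 * (2 * (2 * t ^ 2) + 1) ≤ 3 ^ t := by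
      clear hb
      induction t, ht using Nat.le_induction with
      | base => norm_num
      | succ t ht ih =>
        rw [pow_succ 3 t]
        obtain ⟨s, rfl⟩ := Nat.exists_eq_add_of_le ht
        refine le_trans ?_ (Nat.mul_le_mul_right 3 ih)
        ring_nf
        nlinarith [sq_nonneg s, pow_nonneg (Nat.zero_le s) 3, pow_nonneg (Nat.zero_le s) 4]
    exact (Nat.mul_le_mul hb (by omega)).trans hexp

/-- For every even integer `k ≥ 13` (equivalently, every even `k ≥ 14`), the rational
number `( k! / (2^{k−1}(2^k−1)|B_k|) )²` is not an integer. -/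
theorem stmt_7 (k : ℕ) (heven : Even k) (hk : 13 ≤ k) :
    ¬ ∃ n : ℤ, ((k.factorial : ℚ) / (2 ^ (k - 1) * (2 ^ k - 1) * |bernoulli k|)) ^ 2
      = (n : ℚ) := by
  rintro ⟨n, hn⟩
  obtain ⟨m, rfl⟩ := heven.two_dvd
  have hd := two_pow_sub_one_dvd (by omega) hn
  have hbig : ∀ p, p.Prime → p ∣ 2 ^ (2 * m) - 1 → p ≤ 2 * m + 1 := fun p hp h =>
    prime_le_of_dvd_factorial_mul hp (h.trans hd)
  have h8 : m ≠ 8 := by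
    rintro rfl
    have := hbig 257 (by norm_num) (by norm_num)
    omega
  have h10 : m ≠ 10 := by
    rintro rfl
    have := hbig 41 (by norm_num) (by norm_num)
    omega
  have h12 : m ≠ 12 := by
    rintro rfl
    have := hbig 241 (by norm_num) (by norm_num)
    omega
  have hm : 0 < m := by omega
  have hle := Nat.le_of_dvd (by positivity) (cyclotomic_eval_dvd (by omega) hd)
  have hlt := sub_one_pow_totient_lt_natAbs_cyclotomic_eval (n := m) (q := 4)
    (by omega) (by norm_num)
  have hb := mul_le_three_pow_totient (by omega) h8 h10 h12
  norm_num at hlt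
  omega
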